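/- Fix a nonzero integer k. Then for all odd composite n, |Σ_{w ∈ W(n)} e(kw/n)| / #W(n) ≤ C_k · (log n)/√n for some constant C_k depending only on k, where W(n) is the Miller-Rabin witness set. -/

import Mathlib

open Finset

noncomputable def e (x : ℝ) : ℂ := Complex.exp (2 * Real.pi * Complex.I * x)

/-- The 2-adic valuation of n - 1. -/
def s2 (n : ℕ) : ℕ := (n - 1).factorization 2

/-- The odd part of n - 1. -/
def oddPart (n : ℕ) : ℕ := (n - 1) / 2 ^ s2 n

/-- The Miller-Rabin witness set of n. -/
def witnessSet (n : ℕ) : Finset ℕ :=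
  (Finset.range n).filter (fun a => 1 < a ∧ Nat.gcd a n = 1 ∧
    (a : ZMod n) ^ oddPart n ≠ 1 ∧ ∀ j < s2 n, (a : ZMod n) ^ (2 ^ j * oddPart n) ≠ -1)

/-!
Write `n - 1 = 2 ^ s * d` with `d` odd, and let `j < s` be maximal such that `-1` is a
`2 ^ j * d`-th power of a unit mod `n`. The units that are not witnesses form the disjoint union of
`{u | u ^ d = 1}` and the sets `{u | u ^ (2 ^ i * d) = -1}` for `i ≤ j`. Each of these is empty or a
coset of a subgroup of `(ZMod n)ˣ`, so Parseval bounds its exponential sum by `√(|k| n)`, and the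
witness sum is at most `(j + 3) √(|k| n)`.

Instead of Rabin's inequality, the number of witnesses is bounded from below by `φ n / 2`
(the non-witnesses lie in the proper subgroup `{u | u ^ m = ±1}` with `m = 2 ^ j * d`), hence by
`n / (4 ω)`, where `ω` is the number of prime factors of `n`. That the subgroup is proper is
witnessed by `1 + x` with `x ≠ 0` and `x ^ 2 = 0` if `n` is not squarefree, and otherwise, for
coprime `p q = n`, by a unit that is `1` mod `q` and an `m`-th root of `-1` mod `p`. The product
`(j + 1) ω` that appears in the quotient is at most `log₂ n`, because `2 ^ (j + 1)` divides `p - 1`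
for every prime `p ∣ n`.
-/

section CharacterSums

variable {R : Type*} [CommRing R] [Fintype R] {ψ : AddChar R ℂ}

lemma sum_norm_sq_sum_addChar_mul (hψ : ψ.IsPrimitive) (A : Finset R) :
    ∑ x, ‖∑ a ∈ A, ψ (x * a)‖ ^ 2 = (Fintype.card R : ℝ) * #A := by
  classical
  have expand (x : R) :
      ((‖∑ a ∈ A, ψ (x * a)‖ ^ 2 : ℝ) : ℂ) = ∑ a ∈ A, ∑ b ∈ A, ψ (x * (a - b)) := by
    push_cast
    rw [← Complex.mul_conj', map_sum, sum_mul_sum]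
    simp only [← AddChar.map_neg_eq_conj, ← AddChar.map_add_eq_mul, ← sub_eq_add_neg, ← mul_sub]
  have orthogonality : ∑ x, ∑ a ∈ A, ∑ b ∈ A, ψ (x * (a - b)) = Fintype.card R * #A := by
    calc ∑ x, ∑ a ∈ A, ∑ b ∈ A, ψ (x * (a - b))
        = ∑ a ∈ A, ∑ b ∈ A, ∑ x, ψ (x * (a - b)) := by
          rw [sum_comm]
          exact sum_congr rfl fun a _ ↦ sum_comm
      _ = ∑ a ∈ A, ∑ b ∈ A, if a = b then (Fintype.card R : ℂ) else 0 := by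
          simp only [AddChar.sum_mulShift _ hψ, sub_eq_zero, Nat.cast_ite, Nat.cast_zero]
      _ = Fintype.card R * #A := by
          rw [sum_congr rfl fun a ha ↦ by rw [sum_ite_eq, if_pos ha], sum_const, nsmul_eq_mul,
            mul_comm]
  simp_rw [← expand] at orthogonality
  exact_mod_cast orthogonality

variable [DecidableEq R]

lemma card_mul_left_eq_le_card_annihilator (x y : R) :
    #{z | x * z = y} ≤ #{z | x * z = 0} := by
  rcases ({z | x * z = y} : Finset R).eq_empty_or_nonempty with hempty | ⟨z₀, hz₀⟩
  · simp [hempty]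
  · refine card_le_card_of_injOn (· - z₀) (fun z hz ↦ ?_) sub_left_injective.injOn
    simp only [coe_filter_univ, Set.mem_ofPred_eq, mem_filter_univ] at hz hz₀ ⊢
    rw [mul_sub, hz, hz₀, sub_self]

/-- The function `F y = ∑ h : H, ψ (y * h)` is constant on the orbit of `x` under `H`, which has at
least `#H / #{z | x * z = 0}` elements, while `∑ y, ‖F y‖ ^ 2 = #R * #H`. -/
lemma norm_sum_subgroup_addChar_mul_le (hψ : ψ.IsPrimitive) (H : Subgroup Rˣ) [Fintype H] (x : R) :
    ‖∑ h : H, ψ (x * (h : Rˣ))‖ ≤ √(Fintype.card R * #{z | x * z = 0}) := by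
  set F : R → ℂ := fun y ↦ ∑ h : H, ψ (y * (h : Rˣ))
  let val : H ↪ R := ⟨fun h ↦ (h : Rˣ), Units.val_injective.comp Subtype.val_injective⟩
  have F_mul (h : H) : F (x * (h : Rˣ)) = F x :=
    Fintype.sum_equiv (Equiv.mulLeft h) _ _ fun g ↦ by simp [mul_assoc]
  have parseval : ∑ y, ‖F y‖ ^ 2 = (Fintype.card R : ℝ) * Fintype.card H := by
    simpa [sum_map, val] using sum_norm_sq_sum_addChar_mul hψ (univ.map val)
  have card_fiber_le (y : R) : #{h : H | x * (h : Rˣ) = y} ≤ #{z | x * z = 0} :=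
    (card_le_card_of_injOn val (fun h hh ↦ by simpa [val] using hh) val.injective.injOn).trans
      (card_mul_left_eq_le_card_annihilator x y)
  have key : (Fintype.card H : ℝ) * ‖F x‖ ^ 2 ≤
      Fintype.card H * (Fintype.card R * #{z | x * z = 0}) := by
    calc (Fintype.card H : ℝ) * ‖F x‖ ^ 2 = ∑ h : H, ‖F (x * (h : Rˣ))‖ ^ 2 := by
          simp [F_mul]
      _ = ∑ y, (#{h : H | x * (h : Rˣ) = y} : ℝ) * ‖F y‖ ^ 2 := by
          simp_rw [← nsmul_eq_mul, ← sum_const]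
          exact (sum_fiberwise' univ (fun h : H ↦ x * (h : Rˣ)) fun y ↦ ‖F y‖ ^ 2).symm
      _ ≤ ∑ y, (#{z | x * z = 0} : ℝ) * ‖F y‖ ^ 2 := by
          gcongr with y
          exact card_fiber_le y
      _ = Fintype.card H * (Fintype.card R * #{z | x * z = 0}) := by
          rw [← mul_sum, parseval]
          ring
  exact Real.le_sqrt_of_sq_le (le_of_mul_le_mul_left key (by exact_mod_cast Fintype.card_pos))

lemma norm_sum_pow_eq_addChar_mul_le (hψ : ψ.IsPrimitive) (m : ℕ) (c : Rˣ) (x : R) :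
    ‖∑ u : Rˣ with u ^ m = c, ψ (x * u)‖ ≤ √(Fintype.card R * #{z | x * z = 0}) := by
  rcases ({u | u ^ m = c} : Finset Rˣ).eq_empty_or_nonempty with hempty | ⟨u₀, hu₀⟩
  · simp only [hempty, sum_empty, norm_zero, Real.sqrt_nonneg]
  · rw [mem_filter_univ] at hu₀
    let H : Subgroup Rˣ := (powMonoidHom m).ker
    have coset : ∑ u : Rˣ with u ^ m = c, ψ (x * u) = ∑ h : H, ψ (x * u₀ * (h : Rˣ)) := by
      refine (sum_bij (fun (h : H) _ ↦ u₀ * h) ?_ ?_ ?_ ?_).symm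
      · rintro ⟨h, hh : h ^ m = 1⟩ -
        rw [mem_filter_univ, mul_pow, hu₀, hh, mul_one]
      · exact fun h _ g _ hhg ↦ Subtype.ext (mul_left_cancel hhg)
      · intro u hu
        rw [mem_filter_univ] at hu
        refine ⟨⟨u₀⁻¹ * u, ?_⟩, mem_univ _, mul_inv_cancel_left u₀ u⟩
        change (u₀⁻¹ * u) ^ m = 1
        rw [mul_pow, inv_pow, hu₀, hu, inv_mul_cancel]
      · exact fun h _ ↦ by rw [Units.val_mul, mul_assoc]
    have annihilator : ({z | x * u₀ * z = 0} : Finset R) = ({z | x * z = 0} : Finset R) := by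
      ext z
      rw [mem_filter_univ, mem_filter_univ, mul_right_comm, Units.mul_left_eq_zero]
    rw [coset, ← annihilator]
    exact norm_sum_subgroup_addChar_mul_le hψ H _

end CharacterSums

lemma card_intCast_mul_eq_zero_le {n : ℕ} [NeZero n] {k : ℤ} (hk : k ≠ 0) :
    #{z : ZMod n | (k : ZMod n) * z = 0} ≤ k.natAbs := by
  have natAbs_nsmul_eq_zero_iff (z : ZMod n) : k.natAbs • z = 0 ↔ (k : ZMod n) * z = 0 := by
    rw [← zsmul_eq_mul, natAbs_nsmul_eq_zero]
  simpa only [natAbs_nsmul_eq_zero_iff] using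
    IsAddCyclic.card_nsmul_eq_zero_le (α := ZMod n) (Int.natAbs_pos.mpr hk)

lemma norm_sum_pow_eq_stdAddChar_le {n : ℕ} [NeZero n] {k : ℤ} (hk : k ≠ 0) (m : ℕ)
    (c : (ZMod n)ˣ) :
    ‖∑ u : (ZMod n)ˣ with u ^ m = c, ZMod.stdAddChar ((k : ZMod n) * (u : ZMod n))‖ ≤
      √(k.natAbs * n) := by
  refine (norm_sum_pow_eq_addChar_mul_le (ZMod.isPrimitive_stdAddChar n) m c k).trans ?_
  rw [ZMod.card, mul_comm]
  gcongr
  exact card_intCast_mul_eq_zero_le hk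

lemma prod_le_card_add_one_mul_prod_sub_one (S : Finset ℕ) (hS : ∀ p ∈ S, 2 ≤ p) :
    ∏ p ∈ S, p ≤ (#S + 1) * ∏ p ∈ S, (p - 1) := by
  induction S using Finset.induction_on_max with
  | empty => simp
  | insert p T hT ih =>
    have hp : p ∉ T := fun h ↦ lt_irrefl _ (hT p h)
    have hp2 : 2 ≤ p := hS p (mem_insert_self _ _)
    have hcard : #T ≤ p - 2 := by
      rw [← Nat.card_Ico]
      exact card_le_card fun x hx ↦ mem_Ico.mpr ⟨hS x (mem_insert_of_mem hx), hT x hx⟩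
    have factor : p * (#T + 1) ≤ (#T + 2) * (p - 1) := by
      obtain ⟨q, rfl⟩ := Nat.exists_eq_add_of_le' hp2
      rw [Nat.add_sub_cancel] at hcard
      rw [show q + 2 - 1 = q + 1 by omega]
      linarith
    rw [prod_insert hp, prod_insert hp, card_insert_of_notMem hp]
    calc p * ∏ q ∈ T, q ≤ p * ((#T + 1) * ∏ q ∈ T, (q - 1)) := by
          gcongr
          exact ih fun q hq ↦ hS q (mem_insert_of_mem hq)
      _ = p * (#T + 1) * ∏ q ∈ T, (q - 1) := by ring
      _ ≤ (#T + 2) * (p - 1) * ∏ q ∈ T, (q - 1) := by gcongr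
      _ = (#T + 1 + 1) * ((p - 1) * ∏ q ∈ T, (q - 1)) := by ring

lemma le_card_primeFactors_add_one_mul_totient (n : ℕ) :
    n ≤ (#n.primeFactors + 1) * n.totient := by
  have prod_sub_one_pos : 0 < ∏ p ∈ n.primeFactors, (p - 1) :=
    prod_pos fun p hp ↦ Nat.sub_pos_of_lt (Nat.prime_of_mem_primeFactors hp).one_lt
  refine le_of_mul_le_mul_right ?_ prod_sub_one_pos
  calc n * ∏ p ∈ n.primeFactors, (p - 1) = n.totient * ∏ p ∈ n.primeFactors, p :=
        (Nat.totient_mul_prod_primeFactors n).symm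
    _ ≤ n.totient * ((#n.primeFactors + 1) * ∏ p ∈ n.primeFactors, (p - 1)) := by
        gcongr
        exact prod_le_card_add_one_mul_prod_sub_one _
          fun p hp ↦ (Nat.prime_of_mem_primeFactors hp).two_le
    _ = (#n.primeFactors + 1) * n.totient * ∏ p ∈ n.primeFactors, (p - 1) := by ring

lemma units_neg_one_ne_one {n : ℕ} (hn : 2 < n) : (-1 : (ZMod n)ˣ) ≠ 1 := by
  have : Fact (2 < n) := ⟨hn⟩
  exact fun h ↦ ZMod.neg_one_ne_one (congrArg Units.val h)

lemma two_pow_succ_dvd_sub_one_of_pow_eq_neg_one {p j d : ℕ} (hp : p.Prime) (hp2 : 2 < p)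
    {u : (ZMod p)ˣ} (hu : u ^ (2 ^ j * d) = -1) : 2 ^ (j + 1) ∣ p - 1 := by
  have : Fact p.Prime := ⟨hp⟩
  have pow_eq : (u ^ d) ^ 2 ^ j = -1 := by rw [← pow_mul, mul_comm, hu]
  have order : orderOf (u ^ d) = 2 ^ (j + 1) :=
    orderOf_eq_prime_pow (by rw [pow_eq]; exact units_neg_one_ne_one hp2)
      (by rw [pow_succ, pow_mul, pow_eq, neg_one_sq])
  rw [← order, ← ZMod.card_units p]
  exact orderOf_dvd_card

lemma two_pow_succ_pow_card_primeFactors_le {n j d : ℕ} (hn : Odd n)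
    {u : (ZMod n)ˣ} (hu : u ^ (2 ^ j * d) = -1) : (2 ^ (j + 1)) ^ #n.primeFactors ≤ n := by
  have two_pow_le (p : ℕ) (hp : p ∈ n.primeFactors) : 2 ^ (j + 1) ≤ p := by
    have prime := Nat.prime_of_mem_primeFactors hp
    have dvd := Nat.dvd_of_mem_primeFactors hp
    have two_lt : 2 < p := prime.two_le.lt_of_ne' (hn.ne_two_of_dvd_nat dvd)
    have map_pow_eq : ZMod.unitsMap dvd u ^ (2 ^ j * d) = -1 := by
      rw [← map_pow, hu]
      ext
      simp [ZMod.unitsMap]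
    have := two_pow_succ_dvd_sub_one_of_pow_eq_neg_one prime two_lt map_pow_eq
    exact (Nat.le_of_dvd (Nat.sub_pos_of_lt prime.one_lt) this).trans (Nat.sub_le _ _)
  calc (2 ^ (j + 1)) ^ #n.primeFactors ≤ ∏ p ∈ n.primeFactors, p :=
        pow_card_le_prod _ _ _ two_pow_le
    _ ≤ n := Nat.le_of_dvd hn.pos (Nat.prod_primeFactors_dvd n)

lemma succ_mul_card_primeFactors_mul_log_two_le {n j d : ℕ} (hn : Odd n)
    {u : (ZMod n)ˣ} (hu : u ^ (2 ^ j * d) = -1) :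
    (j + 1) * #n.primeFactors * Real.log 2 ≤ Real.log n := by
  have pow_le : (2 : ℝ) ^ ((j + 1) * #n.primeFactors) ≤ n := by
    rw [pow_mul]
    exact_mod_cast two_pow_succ_pow_card_primeFactors_le hn hu
  calc (j + 1) * #n.primeFactors * Real.log 2
      = Real.log (2 ^ ((j + 1) * #n.primeFactors)) := by rw [Real.log_pow]; push_cast; ring
    _ ≤ Real.log n := Real.log_le_log (by positivity) pow_le

/-- The subgroup of the elements whose `m`-th power is `1` or `-1`. For a suitable `m` it
contains all units mod `n` that are not Miller-Rabin witnesses, without being the whole group. -/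
def powEqOneOrNegOne (G : Type*) [CommGroup G] [HasDistribNeg G] (m : ℕ) : Subgroup G where
  carrier := {u | u ^ m = 1 ∨ u ^ m = -1}
  one_mem' := Or.inl (one_pow m)
  mul_mem' {u v} hu hv := by
    simp only [Set.mem_ofPred_eq, mul_pow] at hu hv ⊢
    rcases hu with hu | hu <;> rcases hv with hv | hv <;> simp [hu, hv]
  inv_mem' {u} hu := by
    simp only [Set.mem_ofPred_eq, inv_pow] at hu ⊢
    rcases hu with hu | hu <;> simp [hu]

lemma mem_powEqOneOrNegOne {G : Type*} [CommGroup G] [HasDistribNeg G] {m : ℕ} {u : G} :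
    u ∈ powEqOneOrNegOne G m ↔ u ^ m = 1 ∨ u ^ m = -1 := Iff.rfl

lemma exists_unit_pow_sub_one_ne_one_of_not_isReduced {R : Type*} [CommRing R] {n : ℕ}
    (hn : n ≠ 0) (hchar : (n : R) = 0) (hred : ¬ IsReduced R) : ∃ v : Rˣ, v ^ (n - 1) ≠ 1 := by
  rw [isReduced_iff_pow_one_lt 2 one_lt_two] at hred
  push Not at hred
  obtain ⟨x, hx, hx0⟩ := hred
  have one_add_pow (N : ℕ) : (1 + x) ^ N = 1 + N * x := by
    induction N with
    | zero => simp
    | succ N ih =>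
      rw [pow_succ, ih]
      push_cast
      linear_combination (N : R) * hx
  obtain ⟨v, hv⟩ := IsNilpotent.isUnit_one_add ⟨2, hx⟩
  refine ⟨v, fun h ↦ hx0 ?_⟩
  have pow_sub_one : (1 + x) ^ (n - 1) = 1 := by
    rw [← hv, ← Units.val_pow_eq_pow_val, h, Units.val_one]
  simpa [← pow_sub_one_mul hn, pow_sub_one, hchar] using one_add_pow n

lemma exists_unit_notMem_powEqOneOrNegOne_of_coprime {p q m : ℕ} (hp : 2 < p) (hq : 2 < q)
    (hpq : p.Coprime q) {b : (ZMod (p * q))ˣ} (hb : b ^ m = -1) :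
    ∃ v, v ∉ powEqOneOrNegOne (ZMod (p * q))ˣ m := by
  let φ : (ZMod (p * q))ˣ ≃* (ZMod p)ˣ × (ZMod q)ˣ :=
    (Units.mapEquiv (ZMod.chineseRemainder hpq).toMulEquiv).trans MulEquiv.prodUnits
  have φ_neg_one : φ (-1) = (-1, -1) := by
    ext <;> simp [φ, MulEquiv.prodUnits]
  have fst_pow : (φ b).1 ^ m = -1 := by
    rw [← Prod.pow_fst, ← map_pow, hb, φ_neg_one]
  have φ_pow : φ (φ.symm ((φ b).1, 1) ^ m) = (-1, 1) := by
    rw [map_pow, MulEquiv.apply_symm_apply, Prod.pow_mk, fst_pow, one_pow]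
  refine ⟨φ.symm ((φ b).1, 1), ?_⟩
  rintro (h | h) <;> rw [h] at φ_pow
  · rw [map_one] at φ_pow
    exact units_neg_one_ne_one hp (congrArg Prod.fst φ_pow).symm
  · rw [φ_neg_one] at φ_pow
    exact units_neg_one_ne_one hq (congrArg Prod.snd φ_pow)

lemma powEqOneOrNegOne_ne_top {n m : ℕ} (hodd : Odd n) (hnp : ¬ n.Prime) (hn : 1 < n)
    (hm : 2 * m ∣ n - 1) {b : (ZMod n)ˣ} (hb : b ^ m = -1) :
    powEqOneOrNegOne (ZMod n)ˣ m ≠ ⊤ := by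
  suffices ∃ v, v ∉ powEqOneOrNegOne (ZMod n)ˣ m by
    obtain ⟨v, hv⟩ := this
    exact fun h ↦ hv (h ▸ Subgroup.mem_top v)
  by_cases hsq : Squarefree n
  · obtain ⟨p, q, hp, hq, rfl⟩ := (Nat.not_prime_iff_exists_mul_eq hn).mp hnp
    obtain ⟨hpodd, hqodd⟩ := Nat.odd_mul.mp hodd
    have two_lt_of_odd {a : ℕ} (ha : Odd a) (ha1 : a ≠ 1) : 2 < a := by
      obtain ⟨c, rfl⟩ := ha
      omega
    exact exists_unit_notMem_powEqOneOrNegOne_of_coprime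
      (two_lt_of_odd hpodd (by rintro rfl; simp at hq))
      (two_lt_of_odd hqodd (by rintro rfl; simp at hp)) (Nat.coprime_of_squarefree_mul hsq) hb
  · have hred : ¬ IsReduced (ZMod n) := by
      rw [isReduced_zmod]
      exact not_or_intro hsq (by omega)
    obtain ⟨v, hv⟩ := exists_unit_pow_sub_one_ne_one_of_not_isReduced (by omega)
      (ZMod.natCast_self n) hred
    obtain ⟨c, hc⟩ := hm
    refine ⟨v, fun h ↦ hv ?_⟩
    have sq_eq_one : (v ^ m) ^ 2 = 1 := by rcases h with h | h <;> simp [h]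
    rw [hc, mul_comm 2 m, pow_mul, pow_mul, sq_eq_one, one_pow]

lemma card_le_two_mul_card_of_subgroup_ne_top {G : Type*} [Group G] [Fintype G] {K : Subgroup G}
    (hK : K ≠ ⊤) {A : Finset G} (hA : ∀ u ∉ K, u ∈ A) : Fintype.card G ≤ 2 * #A := by
  classical
  obtain ⟨v, hv⟩ : ∃ v, v ∉ K := by
    by_contra! h
    exact hK ((Subgroup.eq_top_iff' K).mpr h)
  have card_compl_le : #Aᶜ ≤ #A := by
    refine card_le_card_of_injOn (v * ·) (fun u hu ↦ hA _ ?_) (mul_right_injective v).injOn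
    have huK : u ∈ K := not_imp_comm.mp (hA u) (by simpa using hu)
    rwa [K.mul_mem_cancel_right huK]
  rw [← card_add_card_compl A]
  omega

lemma pow_eq_one_of_pow_eq_neg_one_of_lt {M : Type*} [Monoid M] [HasDistribNeg M] {u : M}
    {d i j : ℕ} (hij : i < j) (hu : u ^ (2 ^ i * d) = -1) : u ^ (2 ^ j * d) = 1 := by
  obtain ⟨c, rfl⟩ := Nat.exists_eq_add_of_lt hij
  rw [show 2 ^ (i + c + 1) * d = 2 ^ i * d * 2 * 2 ^ c by ring, pow_mul, pow_mul, hu, neg_one_sq,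
    one_pow]

lemma two_pow_s2_mul_oddPart (n : ℕ) : 2 ^ s2 n * oddPart n = n - 1 :=
  Nat.ordProj_mul_ordCompl_eq_self (n - 1) 2

lemma odd_oddPart {n : ℕ} (hn : 1 < n) : Odd (oddPart n) := by
  rw [← Nat.not_even_iff_odd, even_iff_two_dvd]
  exact Nat.not_dvd_ordCompl Nat.prime_two (by omega)

lemma s2_pos {n : ℕ} (hodd : Odd n) (hn : 1 < n) : 0 < s2 n :=
  Nat.prime_two.factorization_pos_of_dvd (by omega) (Nat.Odd.sub_odd hodd odd_one).two_dvd

/-- The Miller-Rabin witnesses of `n` as units of `ZMod n`, rather than as the representatives in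
`[0, n)` that form `witnessSet n`. -/
def witnessUnits (n : ℕ) [NeZero n] : Finset (ZMod n)ˣ :=
  {u | u ^ oddPart n ≠ 1 ∧ ∀ j < s2 n, u ^ (2 ^ j * oddPart n) ≠ -1}

/-- The exponents `j < s2 n` for which some unit mod `n` passes the Miller-Rabin test through
`u ^ (2 ^ j * oddPart n) = -1`. -/
def negOneLevels (n : ℕ) : Set ℕ :=
  {j | j < s2 n ∧ ∃ u : (ZMod n)ˣ, u ^ (2 ^ j * oddPart n) = -1}

lemma exists_isGreatest_negOneLevels {n : ℕ} (hodd : Odd n) (hn : 1 < n) :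
    ∃ j, IsGreatest (negOneLevels n) j := by
  have bddAbove : BddAbove (negOneLevels n) := ⟨s2 n, fun _ hj ↦ hj.1.le⟩
  refine bddAbove.exists_isGreatest_of_nonempty ⟨0, s2_pos hodd hn, -1, ?_⟩
  rw [pow_zero, one_mul, (odd_oddPart hn).neg_one_pow]

/-- The embedding of the units mod `n` into `ℕ` by their representatives in `[0, n)`. -/
def unitRepr (n : ℕ) [NeZero n] : (ZMod n)ˣ ↪ ℕ :=
  ⟨fun u ↦ (u : ZMod n).val, (ZMod.val_injective n).comp Units.val_injective⟩

lemma witnessSet_eq_map {n : ℕ} [NeZero n] (hn : 1 < n) :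
    witnessSet n = (witnessUnits n).map (unitRepr n) := by
  have : Fact (1 < n) := ⟨hn⟩
  have pow_eq_iff (u c : (ZMod n)ˣ) (m : ℕ) : u ^ m = c ↔ (u : ZMod n) ^ m = c := by
    rw [← Units.val_pow_eq_pow_val, Units.val_inj]
  ext a
  simp only [witnessSet, witnessUnits, unitRepr, mem_filter, mem_range, mem_map, mem_univ,
    true_and, ne_eq, pow_eq_iff, Units.val_one, Units.val_neg, Function.Embedding.coeFn_mk]
  constructor
  · rintro ⟨ha, -, hcop, hne_one, hne_neg_one⟩
    refine ⟨ZMod.unitOfCoprime a hcop, ⟨?_, ?_⟩, ?_⟩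
    · simpa using hne_one
    · simpa using hne_neg_one
    · simpa using ZMod.val_cast_of_lt ha
  · rintro ⟨u, ⟨hne_one, hne_neg_one⟩, rfl⟩
    simp only [ZMod.natCast_zmod_val]
    refine ⟨ZMod.val_lt _, ?_, ZMod.val_coe_unit_coprime u, hne_one, hne_neg_one⟩
    have val_ne_zero : (u : ZMod n).val ≠ 0 := (ZMod.val_ne_zero _).mpr u.ne_zero
    have val_ne_one : (u : ZMod n).val ≠ 1 := fun h ↦ hne_one <| by
      rw [(ZMod.val_eq_one hn _).mp h, one_pow]
    omega

section Level

variable {n : ℕ} [NeZero n] {j : ℕ}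

lemma compl_witnessUnits (hj : IsGreatest (negOneLevels n) j) :
    (witnessUnits n)ᶜ = ({u | u ^ oddPart n = 1} : Finset (ZMod n)ˣ) ∪
      (range (j + 1)).biUnion fun i ↦ {u | u ^ (2 ^ i * oddPart n) = -1} := by
  ext u
  simp only [witnessUnits, mem_compl, mem_filter_univ, not_and_or, not_not, not_forall, mem_union,
    mem_biUnion, mem_range, exists_prop, ne_eq]
  refine or_congr_right (exists_congr fun i ↦ and_congr_left fun hu ↦ ?_)
  exact ⟨fun hi ↦ Nat.lt_succ_of_le (hj.2 ⟨hi, u, hu⟩),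
    fun hi ↦ (Nat.le_of_lt_succ hi).trans_lt hj.1.1⟩

lemma sum_compl_witnessUnits {M : Type*} [AddCommMonoid M] (hn : 2 < n)
    (hj : IsGreatest (negOneLevels n) j) (f : (ZMod n)ˣ → M) :
    ∑ u ∈ (witnessUnits n)ᶜ, f u = ∑ u with u ^ oddPart n = 1, f u +
      ∑ i ∈ range (j + 1), ∑ u with u ^ (2 ^ i * oddPart n) = -1, f u := by
  have ne_of_lt {u : (ZMod n)ˣ} {a b : ℕ} (hab : a < b) (ha : u ^ (2 ^ a * oddPart n) = -1) :
      u ^ (2 ^ b * oddPart n) ≠ -1 := by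
    rw [pow_eq_one_of_pow_eq_neg_one_of_lt hab ha]
    exact (units_neg_one_ne_one hn).symm
  rw [compl_witnessUnits hj, sum_union, sum_biUnion]
  · intro a _ b _ hab
    rw [Function.onFun, disjoint_filter]
    intro u _ ha hb
    rcases lt_or_gt_of_ne hab with hlt | hlt
    · exact ne_of_lt hlt ha hb
    · exact ne_of_lt hlt hb ha
  · simp only [disjoint_biUnion_right, disjoint_filter]
    intro i _ u _ hu
    rw [mul_comm, pow_mul, hu, one_pow]
    exact (units_neg_one_ne_one hn).symm

lemma norm_sum_witnessUnits_le (hn : 2 < n) {k : ℤ} (hk : k ≠ 0)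
    (hj : IsGreatest (negOneLevels n) j) :
    ‖∑ u ∈ witnessUnits n, ZMod.stdAddChar ((k : ZMod n) * (u : ZMod n))‖ ≤
      (j + 3) * √(k.natAbs * n) := by
  set f : (ZMod n)ˣ → ℂ := fun u ↦ ZMod.stdAddChar ((k : ZMod n) * (u : ZMod n))
  have all_le : ‖∑ u, f u‖ ≤ √(k.natAbs * n) := by
    simpa only [pow_zero, filter_true] using norm_sum_pow_eq_stdAddChar_le hk 0 1
  have one_le : ‖∑ u with u ^ oddPart n = 1, f u‖ ≤ √(k.natAbs * n) :=
    norm_sum_pow_eq_stdAddChar_le hk _ _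
  have neg_one_le : ‖∑ i ∈ range (j + 1), ∑ u with u ^ (2 ^ i * oddPart n) = -1, f u‖ ≤
      (j + 1) * √(k.natAbs * n) := by
    refine (norm_sum_le_of_le _ fun i _ ↦ norm_sum_pow_eq_stdAddChar_le hk _ _).trans_eq ?_
    rw [sum_const, card_range, nsmul_eq_mul, Nat.cast_succ]
  calc ‖∑ u ∈ witnessUnits n, f u‖
      = ‖∑ u, f u - (∑ u with u ^ oddPart n = 1, f u +
          ∑ i ∈ range (j + 1), ∑ u with u ^ (2 ^ i * oddPart n) = -1, f u)‖ := by
        rw [← sum_compl_witnessUnits hn hj, ← sum_add_sum_compl (witnessUnits n),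
          add_sub_cancel_right]
    _ ≤ √(k.natAbs * n) + (√(k.natAbs * n) + (j + 1) * √(k.natAbs * n)) :=
        (norm_sub_le _ _).trans (add_le_add all_le (norm_add_le_of_le one_le neg_one_le))
    _ = (j + 3) * √(k.natAbs * n) := by ring

lemma mem_powEqOneOrNegOne_of_notMem_witnessUnits (hj : IsGreatest (negOneLevels n) j)
    {u : (ZMod n)ˣ} (hu : u ∉ witnessUnits n) :
    u ∈ powEqOneOrNegOne (ZMod n)ˣ (2 ^ j * oddPart n) := by
  simp only [← mem_compl, compl_witnessUnits hj, mem_union, mem_biUnion, mem_filter_univ,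
    mem_range] at hu
  rw [mem_powEqOneOrNegOne]
  rcases hu with hu | ⟨i, hi, hu⟩
  · left
    rw [mul_comm, pow_mul, hu, one_pow]
  · rcases (Nat.le_of_lt_succ hi).lt_or_eq with hlt | rfl
    · exact Or.inl (pow_eq_one_of_pow_eq_neg_one_of_lt hlt hu)
    · exact Or.inr hu

end Level

lemma totient_le_two_mul_card_witnessUnits {n : ℕ} [NeZero n] (hodd : Odd n) (hnp : ¬ n.Prime)
    (hn : 1 < n) : n.totient ≤ 2 * #(witnessUnits n) := by
  obtain ⟨j, hj⟩ := exists_isGreatest_negOneLevels hodd hn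
  obtain ⟨hjs, b, hb⟩ := hj.1
  have dvd : 2 * (2 ^ j * oddPart n) ∣ n - 1 := by
    rw [← two_pow_s2_mul_oddPart n, ← mul_assoc, ← pow_succ']
    exact mul_dvd_mul_right (pow_dvd_pow 2 hjs) _
  rw [← ZMod.card_units_eq_totient]
  exact card_le_two_mul_card_of_subgroup_ne_top (powEqOneOrNegOne_ne_top hodd hnp hn dvd hb)
    fun u ↦ not_imp_comm.mp (mem_powEqOneOrNegOne_of_notMem_witnessUnits hj)

lemma le_four_mul_card_primeFactors_mul_card_witnessSet {n : ℕ} (hodd : Odd n) (hnp : ¬ n.Prime)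
    (hn : 1 < n) : n ≤ 4 * #n.primeFactors * #(witnessSet n) := by
  have : NeZero n := ⟨by omega⟩
  have card_primeFactors_pos : 0 < #n.primeFactors :=
    card_pos.mpr (Nat.nonempty_primeFactors.mpr hn)
  rw [witnessSet_eq_map hn, card_map]
  calc n ≤ (#n.primeFactors + 1) * n.totient := le_card_primeFactors_add_one_mul_totient n
    _ ≤ 2 * #n.primeFactors * (2 * #(witnessUnits n)) :=
        Nat.mul_le_mul (by omega) (totient_le_two_mul_card_witnessUnits hodd hnp hn)
    _ = 4 * #n.primeFactors * #(witnessUnits n) := by ring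

lemma e_mul_val_div_eq_stdAddChar (k : ℤ) {n : ℕ} [NeZero n] (x : ZMod n) :
    e ((k : ℝ) * x.val / n) = ZMod.stdAddChar ((k : ZMod n) * x) := by
  have cast_eq : (k : ZMod n) * x = ((k * x.val : ℤ) : ZMod n) := by simp
  rw [cast_eq, ZMod.stdAddChar_coe, e]
  congr 1
  push_cast
  ring

lemma norm_sum_witnessSet_le {n j : ℕ} (hn : 2 < n) {k : ℤ} (hk : k ≠ 0)
    (hj : IsGreatest (negOneLevels n) j) :
    ‖∑ w ∈ witnessSet n, e ((k : ℝ) * w / n)‖ ≤ (j + 3) * √(k.natAbs * n) := by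
  have : NeZero n := ⟨by omega⟩
  rw [witnessSet_eq_map (by omega), sum_map]
  simp only [unitRepr, Function.Embedding.coeFn_mk, e_mul_val_div_eq_stdAddChar]
  exact norm_sum_witnessUnits_le hn hk hj

lemma norm_sum_witnessSet_div_card_le {n : ℕ} (hodd : Odd n) (hnp : ¬ n.Prime) (hn : 1 < n)
    {k : ℤ} (hk : k ≠ 0) :
    ‖∑ w ∈ witnessSet n, e ((k : ℝ) * w / n)‖ / #(witnessSet n) ≤
      12 * √k.natAbs / Real.log 2 * Real.log n / √n := by
  have two_lt : 2 < n := by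
    obtain ⟨c, rfl⟩ := hodd
    omega
  have : NeZero n := ⟨by omega⟩
  obtain ⟨j, hj⟩ := exists_isGreatest_negOneLevels hodd hn
  obtain ⟨-, u, hu⟩ := hj.1
  set ω := #n.primeFactors
  have ω_pos : 0 < ω := card_pos.mpr (Nat.nonempty_primeFactors.mpr hn)
  have sum_le : ‖∑ w ∈ witnessSet n, e ((k : ℝ) * w / n)‖ ≤ 3 * (j + 1) * (√k.natAbs * √n) := by
    rw [← Real.sqrt_mul (Nat.cast_nonneg _)]
    refine (norm_sum_witnessSet_le two_lt hk hj).trans ?_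
    gcongr
    linarith
  have le_card : (n : ℝ) / (4 * ω) ≤ #(witnessSet n) := by
    rw [div_le_iff₀' (by positivity)]
    exact_mod_cast le_four_mul_card_primeFactors_mul_card_witnessSet hodd hnp hn
  have le_log : (j + 1) * ω ≤ Real.log n / Real.log 2 := by
    rw [le_div_iff₀ (Real.log_pos one_lt_two)]
    exact succ_mul_card_primeFactors_mul_log_two_le hodd hu
  calc ‖∑ w ∈ witnessSet n, e ((k : ℝ) * w / n)‖ / #(witnessSet n)
      ≤ 3 * (j + 1) * (√k.natAbs * √n) / (n / (4 * ω)) := by gcongr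
    _ = 12 * √k.natAbs * ((j + 1) * ω) * (√n / n) := by
        field_simp
        ring
    _ ≤ 12 * √k.natAbs * (Real.log n / Real.log 2) * (√n / n) := by gcongr
    _ = 12 * √k.natAbs / Real.log 2 * Real.log n / √n := by
        rw [Real.sqrt_div_self]
        ring

/-- the normalized witness exponential sum is at most C_k · log n / √n. -/
theorem witness_sum_normalized_bound (k : ℤ) (hk : k ≠ 0) :
    ∃ C : ℝ, ∀ n : ℕ, Odd n → ¬ n.Prime → 1 < n →
      ‖∑ w ∈ witnessSet n, e ((k : ℝ) * w / n)‖ / ((witnessSet n).card : ℝ) ≤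
        C * Real.log n / Real.sqrt n :=
  ⟨12 * √k.natAbs / Real.log 2,
    fun _ hodd hnp hn ↦ norm_sum_witnessSet_div_card_le hodd hnp hn hk⟩
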